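/- Consider an irreducible aperiodic positive recurrent GI/G/1-type Markov chain with stationary distribution π and with Σ_{k=0}^{∞} k A_k e < ∞ entrywise, and let l ∈ {2,3,…}. If Σ_{i=0}^{∞} i^l π_{i,j} < ∞ for all phases j = 1,…,m (where π_{i,j} is the stationary probability of state (i,j)), then Σ_{k=1}^{∞} k^l A_k e < ∞ and Σ_{k=1}^{∞} k^l B_k e < ∞ entrywise. -/

import Mathlib

open MeasureTheory Filter Topology
open scoped ENNReal NNReal BigOperators

namespace GIG1

/-- The state space of a `GI/G/1`-type Markov chain: level `i : ℕ`, phase `j : Fin m`. -/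
abbrev S (m : ℕ) := ℕ × Fin m

/-- The transition kernel of the `GI/G/1`-type Markov chain with matrix blocks `A, B`. -/
noncomputable def P {m : ℕ} (A B : ℤ → Matrix (Fin m) (Fin m) ℝ≥0∞) : S m → S m → ℝ≥0∞
  | (0, j), (k, s) => B (k : ℤ) j s
  | (i + 1, j), (0, s) => B (-(i + 1 : ℤ)) j s
  | (i + 1, j), (k + 1, s) => A ((k : ℤ) - (i : ℤ)) j s

/-- `n`-step transition probabilities. -/
noncomputable def Pn {m : ℕ} (P : S m → S m → ℝ≥0∞) : ℕ → S m → S m → ℝ≥0∞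
  | 0, x, y => if x = y then 1 else 0
  | n + 1, x, y => ∑' z : S m, P x z * Pn P n z y

def Stochastic {m : ℕ} (P : S m → S m → ℝ≥0∞) : Prop := ∀ x, ∑' y, P x y = 1

def ChainIrreducible {m : ℕ} (P : S m → S m → ℝ≥0∞) : Prop :=
  ∀ x y, ∃ n, 1 ≤ n ∧ 0 < Pn P n x y

def ChainAperiodic {m : ℕ} (P : S m → S m → ℝ≥0∞) : Prop :=
  ∀ x, ∃ N, ∀ n ≥ N, 0 < Pn P n x x

/-- `pd` is a stationary probability distribution of `P`. -/
def IsStationary {m : ℕ} (P : S m → S m → ℝ≥0∞) (pd : S m → ℝ≥0∞) : Prop :=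
  (∑' x, pd x) = 1 ∧ ∀ y, (∑' x, pd x * P x y) = pd y

/-- `Pr x` is the law of the chain with kernel `P` started at `x`, characterized by its
cylinder probabilities. -/
def IsPathMeasure {m : ℕ} (P : S m → S m → ℝ≥0∞) (Pr : S m → Measure (ℕ → S m)) : Prop :=
  (∀ x, IsProbabilityMeasure (Pr x)) ∧
    ∀ (x : S m) (n : ℕ) (u : ℕ → S m),
      Pr x {ω | ∀ s ≤ n, ω s = u s}
        = if u 0 = x then ∏ s ∈ Finset.range n, P (u s) (u (s + 1)) else 0

/-- The first return time `τ₀` to level 0 (as an element of `ℝ≥0∞`; `∞` if there is no return). -/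
noncomputable def tau0 {m : ℕ} (ω : ℕ → S m) : ℝ≥0∞ :=
  sInf {t : ℝ≥0∞ | ∃ n : ℕ, t = n ∧ 1 ≤ n ∧ (ω n).1 = 0}

/-- The first hitting time `σ₀` of level 0. -/
noncomputable def sigma0 {m : ℕ} (ω : ℕ → S m) : ℝ≥0∞ :=
  sInf {t : ℝ≥0∞ | ∃ n : ℕ, t = n ∧ (ω n).1 = 0}

theorem pd_Pn {m : ℕ} {Q : S m → S m → ℝ≥0∞} {pd : S m → ℝ≥0∞} (h : IsStationary Q pd)
    (n : ℕ) (y : S m) : ∑' x, pd x * Pn Q n x y = pd y := by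
  induction n with
  | zero =>
    rw [tsum_eq_single y]
    · simp [Pn]
    · intro b hb
      simp [Pn, hb]
  | succ n ih =>
    simp only [Pn]
    simp_rw [← ENNReal.tsum_mul_left]
    rw [ENNReal.tsum_comm]
    simp_rw [← mul_assoc, ENNReal.tsum_mul_right, h.2]
    exact ih

theorem pd_pos {m : ℕ} {Q : S m → S m → ℝ≥0∞} {pd : S m → ℝ≥0∞} (h : IsStationary Q pd)
    (hirr : ChainIrreducible Q) (y : S m) : pd y ≠ 0 := by
  intro hy
  have h0 : ∀ x, pd x = 0 := by
    intro x
    obtain ⟨n, -, hn⟩ := hirr x y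
    have h1 := pd_Pn h n y
    rw [hy, ENNReal.tsum_eq_zero] at h1
    rcases mul_eq_zero.1 (h1 x) with h2 | h2
    · exact h2
    · exact absurd h2 hn.ne'
  have h1 := h.1
  simp [h0] at h1

theorem row_moment {m : ℕ} {Q : S m → S m → ℝ≥0∞} {pd : S m → ℝ≥0∞} (h : IsStationary Q pd)
    (hirr : ChainIrreducible Q) (l : ℕ)
    (hpimom : ∀ j : Fin m, (∑' i : ℕ, (i : ℝ≥0∞) ^ l * pd (i, j)) < ⊤) (x : S m) :
    (∑' k : ℕ, (k : ℝ≥0∞) ^ l * ∑ s, Q x (k, s)) < ⊤ := by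
  have h1 : pd x * (∑' k : ℕ, (k : ℝ≥0∞) ^ l * ∑ s, Q x (k, s)) < ⊤ := by
    calc pd x * (∑' k : ℕ, (k : ℝ≥0∞) ^ l * ∑ s, Q x (k, s))
        = ∑' k : ℕ, (k : ℝ≥0∞) ^ l * ∑ s, pd x * Q x (k, s) := by
          rw [← ENNReal.tsum_mul_left]
          congr 1
          ext k
          rw [← Finset.mul_sum]
          ring
      _ ≤ ∑' k : ℕ, (k : ℝ≥0∞) ^ l * ∑ s, pd (k, s) := by
          refine ENNReal.tsum_le_tsum fun k => ?_
          refine mul_le_mul_right (Finset.sum_le_sum fun s _ => ?_) _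
          rw [← h.2 (k, s)]
          exact ENNReal.le_tsum x
      _ = ∑ s, ∑' k : ℕ, (k : ℝ≥0∞) ^ l * pd (k, s) := by
          simp_rw [Finset.mul_sum]
          exact Summable.tsum_finsetSum fun _ _ => ENNReal.summable
      _ < ⊤ := ENNReal.sum_lt_top.2 fun s _ => hpimom s
  rcases ENNReal.mul_lt_top_iff.1 h1 with h2 | h2 | h2
  · exact h2.2
  · exact absurd h2 (pd_pos h hirr x)
  · rw [h2]; exact ENNReal.zero_lt_top

/-- For an irreducible aperiodic positive recurrent `GI/G/1`-type chain
with stationary distribution `π`, `∑ k A_k e < ∞` entrywise and `l ≥ 2`: if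
`∑_i i^l π_{i,j} < ∞` for all phases `j`, then `∑ k^l A_k e < ∞` and `∑ k^l B_k e < ∞`
entrywise. -/
theorem stationary_moments_imply_block_moments {m : ℕ} (hm : 0 < m)
    (A B : ℤ → Matrix (Fin m) (Fin m) ℝ≥0∞)
    (hP : Stochastic (P A B))
    (hirr : ChainIrreducible (P A B)) (hap : ChainAperiodic (P A B))
    (pd : S m → ℝ≥0∞) (hpd : IsStationary (P A B) pd)
    (l : ℕ) (hl : 2 ≤ l)
    (hAmom : ∀ r : Fin m, (∑' k : ℕ, (k : ℝ≥0∞) * ∑ s, A (k : ℤ) r s) < ⊤)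
    (hpimom : ∀ j : Fin m, (∑' i : ℕ, (i : ℝ≥0∞) ^ l * pd (i, j)) < ⊤) :
    (∀ r : Fin m, (∑' k : ℕ, (k : ℝ≥0∞) ^ l * ∑ s, A (k : ℤ) r s) < ⊤) ∧
      (∀ r : Fin m, (∑' k : ℕ, (k : ℝ≥0∞) ^ l * ∑ s, B (k : ℤ) r s) < ⊤) := by
  constructor
  · intro r
    refine lt_of_le_of_lt ?_ (row_moment hpd hirr l hpimom (1, r))
    refine le_trans ?_ (ENNReal.tsum_comp_le_tsum_of_injective Nat.succ_injective _)
    refine ENNReal.tsum_le_tsum fun k => ?_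
    have h1 : ∀ s, P A B (1, r) (k.succ, s) = A (k : ℤ) r s := by
      intro s
      show A ((k : ℤ) - ((0 : ℕ) : ℤ)) r s = _
      simp
    simp only [h1]
    gcongr
    exact Nat.le_succ k
  · intro r
    have := row_moment hpd hirr l hpimom (0, r)
    simpa [P] using this

end GIG1
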